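/- Simulator correctness / conditional structure of the z-register: fix a matrix M ∈ F_2^{q×m}, an input x ∈ F_2^m, and let R be uniform on F_2^{mq} and S uniform on F_2^{q(m−1)}, independent. Write (W, Z) = RE_M(x; R, S). Then for every w ∈ F_2^{mq}, the conditional distribution of Z given W = w equals the product over rows i ∈ {1,…,q} of the uniform distribution on the parity class { z_i ∈ F_2^m : ⊕_{j=1}^m z_{i,j} = (Mx)_i ⊕ σ_i(w) }, where σ_i(w) = ⊕_{j=1}^m M_{i,j}·a_{j,i}(w). -/

import Mathlib

open Finset

/-- Boundary-extended horizontal mask: `sBext m s i k` is the 1-based `s_{i,k}`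
for `k ∈ {1,…,m-1}`, with the boundary convention `s_{i,0} = s_{i,m} = 0`. -/
def sBext (m : ℕ) {q : ℕ} (s : Fin q → Fin (m - 1) → ZMod 2) (i : Fin q) (k : ℕ) :
    ZMod 2 :=
  if h : 1 ≤ k ∧ k ≤ m - 1 then s i ⟨k - 1, by omega⟩ else 0

/-- `REw x r j i` is the output bit `w_{j+1,i}` (1-based column `j+1`, `w`-index
`i ∈ {0,…,q-1}`): `w_{j,0} = x_j ⊕ r_{j,1}` and `w_{j,i} = r_{j,i} ⊕ r_{j,i+1}`;
here `r j i` denotes `r_{j+1,i+1}` in the 1-based notation. -/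
def REw {m q : ℕ} (x : Fin m → ZMod 2) (r : Fin m → Fin q → ZMod 2) :
    Fin m → Fin q → ZMod 2 :=
  fun j i =>
    (if (i : ℕ) = 0 then x j
      else r j ⟨(i : ℕ) - 1, Nat.lt_of_le_of_lt (Nat.sub_le _ _) i.isLt⟩) + r j i

/-- `REz M r s i j` is the output bit `z_{i+1,j+1}` (1-based):
`z_{i,j} = s_{i,j-1} ⊕ s_{i,j} ⊕ M_{i,j}·r_{j,i}`. -/
def REz {m q : ℕ} (M : Fin q → Fin m → ZMod 2) (r : Fin m → Fin q → ZMod 2)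
    (s : Fin q → Fin (m - 1) → ZMod 2) : Fin q → Fin m → ZMod 2 :=
  fun i j => sBext m s i (j : ℕ) + sBext m s i ((j : ℕ) + 1) + M i j * r j i

/-- `aFun w j i = w_{j,0} ⊕ ⋯ ⊕ w_{j,i}` (0-based `i : Fin q`), i.e. the prefix
parity `a_{j,i+1}` in the 1-based notation of the paper. -/
def aFun {m q : ℕ} (w : Fin m → Fin q → ZMod 2) (j : Fin m) (i : Fin q) : ZMod 2 :=
  ∑ k ∈ Finset.Iic i, w j k

open scoped ENNReal

/-- The product of two probability mass functions (joint distribution of a pair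
of independent random variables). -/
noncomputable def pmfProd {α β : Type*} (p : PMF α) (p' : PMF β) : PMF (α × β) :=
  p.bind fun a => p'.map fun b => (a, b)

/-!
In characteristic two, `t k + t (k + 1) = y k` for all `k` says exactly that `t` is its initial
value plus the partial sums of `y`. Applied to a column `x j, r j 0, r j 1, …`, this recovers `r`
from `w`. Applied to a row `0, s i 0, s i 1, …, 0`, it recovers `s` from `z` and `r`, and the final
boundary value `0` can be met precisely when `z i j + M i j * r j i` has total sum `0` over `j`.
So each `(w, z)` has one preimage if all row parities are right and none otherwise, and a preimage
has probability `2^{-mq} * (2^{-(m-1)})^q`.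
-/

section PartialSum

theorem forall_succ_eq_castSucc_add_iff {A : Type*} [AddMonoid A] {n : ℕ} (t : Fin (n + 1) → A)
    (y : Fin n → A) :
    (∀ k : Fin n, t k.succ = t k.castSucc + y k) ↔ ∀ k, t k = t 0 + Fin.partialSum y k := by
  constructor
  · intro h k
    induction k using Fin.induction with
    | zero => simp
    | succ k ih => rw [h, ih, Fin.partialSum_succ, add_assoc]
  · intro h k
    rw [h k.succ, h k.castSucc, Fin.partialSum_succ, add_assoc]

theorem forall_castSucc_add_succ_eq_iff {R : Type*} [Ring R] [CharP R 2] {n : ℕ}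
    (t : Fin (n + 1) → R) (y : Fin n → R) :
    (∀ k : Fin n, t k.castSucc + t k.succ = y k) ↔ ∀ k, t k = t 0 + Fin.partialSum y k := by
  rw [← forall_succ_eq_castSucc_add_iff]
  refine forall_congr' fun k => ?_
  rw [add_comm, CharTwo.add_eq_iff_eq_add, add_comm]

theorem partialSum_eq_sum_filter {A : Type*} [AddCommMonoid A] {n : ℕ} (y : Fin n → A)
    (k : Fin (n + 1)) : Fin.partialSum y k = ∑ j with j.castSucc < k, y j :=
  List.sum_take_ofFn y k

theorem partialSum_last {A : Type*} [AddCommMonoid A] {n : ℕ} (y : Fin n → A) :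
    Fin.partialSum y (Fin.last n) = ∑ j, y j := by
  simp [partialSum_eq_sum_filter, Fin.castSucc_lt_last]

end PartialSum

section Column

variable {m q : ℕ}

theorem aFun_eq_partialSum (w : Fin m → Fin q → ZMod 2) (j : Fin m) (i : Fin q) :
    aFun w j i = Fin.partialSum (w j) i.succ := by
  rw [partialSum_eq_sum_filter, aFun]
  congr 1
  ext k
  simp [Fin.castSucc_lt_succ_iff]

theorem REw_apply_eq_castSucc_add_succ (x : Fin m → ZMod 2) (r : Fin m → Fin q → ZMod 2)
    (j : Fin m) (i : Fin q) :
    REw x r j i = (Fin.cons (x j) (r j) : Fin (q + 1) → ZMod 2) i.castSucc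
      + (Fin.cons (x j) (r j) : Fin (q + 1) → ZMod 2) i.succ := by
  obtain ⟨_ | i, hi⟩ := i <;> rfl

/-- The column masks `r_{j,i} = x_j ⊕ a_{j,i}(w)` forced by the input `x` and the output `w`. -/
def columnMask (x : Fin m → ZMod 2) (w : Fin m → Fin q → ZMod 2) : Fin m → Fin q → ZMod 2 :=
  fun j i => x j + aFun w j i

theorem REw_eq_iff (x : Fin m → ZMod 2) (r w : Fin m → Fin q → ZMod 2) :
    REw x r = w ↔ r = columnMask x w := by
  simp only [funext_iff, REw_apply_eq_castSucc_add_succ, columnMask, aFun_eq_partialSum]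
  refine forall_congr' fun j => ?_
  rw [forall_castSucc_add_succ_eq_iff, Fin.forall_fin_succ]
  simp

theorem sum_mul_columnMask (a x : Fin m → ZMod 2) (w : Fin m → Fin q → ZMod 2) (i : Fin q) :
    ∑ j, a j * columnMask x w j i = ∑ j, a j * x j + ∑ j, a j * aFun w j i := by
  simp only [columnMask, mul_add, Finset.sum_add_distrib]

end Column

section Row

variable {m q : ℕ}

theorem sBext_zero (s : Fin q → Fin (m - 1) → ZMod 2) (i : Fin q) : sBext m s i 0 = 0 :=
  dif_neg (by omega)

theorem sBext_last (s : Fin q → Fin (m - 1) → ZMod 2) (i : Fin q) : sBext m s i m = 0 :=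
  dif_neg (by omega)

theorem sBext_succ (s : Fin q → Fin (m - 1) → ZMod 2) (i : Fin q) (k : Fin (m - 1)) :
    sBext m s i (k + 1) = s i k :=
  dif_pos (by omega)

theorem forall_sBext_eq_iff (s : Fin q → Fin (m - 1) → ZMod 2) (i : Fin q)
    (t : Fin (m + 1) → ZMod 2) :
    (∀ k : Fin (m + 1), sBext m s i k = t k) ↔
      t 0 = 0 ∧ t (Fin.last m) = 0 ∧ ∀ k : Fin (m - 1), s i k = t ⟨k + 1, by omega⟩ := by
  constructor
  · intro h
    refine ⟨?_, ?_, fun k => ?_⟩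
    · rw [← h, Fin.val_zero, sBext_zero]
    · rw [← h, Fin.val_last, sBext_last]
    · rw [← h, sBext_succ]
  · rintro ⟨h_zero, h_last, h_inner⟩ ⟨k, hk⟩
    obtain rfl | rfl | ⟨l, rfl⟩ : k = 0 ∨ k = m ∨ ∃ l : Fin (m - 1), k = l + 1 := by
      by_cases h : k = 0 ∨ k = m
      · tauto
      · exact .inr (.inr ⟨⟨k - 1, by omega⟩, by simp only; omega⟩)
    · exact (sBext_zero s i).trans h_zero.symm
    · exact (sBext_last s i).trans h_last.symm
    · exact (sBext_succ s i l).trans (h_inner l)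

theorem forall_sBext_add_sBext_eq_iff (s : Fin q → Fin (m - 1) → ZMod 2) (i : Fin q)
    (y : Fin m → ZMod 2) :
    (∀ j : Fin m, sBext m s i j + sBext m s i (j + 1) = y j) ↔
      ∑ j, y j = 0 ∧ ∀ k : Fin (m - 1), s i k = Fin.partialSum y ⟨k + 1, by omega⟩ := by
  have telescope := forall_castSucc_add_succ_eq_iff (fun k : Fin (m + 1) => sBext m s i k) y
  simp only [Fin.val_castSucc, Fin.val_succ, Fin.val_zero, sBext_zero, zero_add] at telescope
  rw [telescope, forall_sBext_eq_iff, partialSum_last]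
  simp

/-- The row masks forced by the output `z` once the column masks `r` are known:
`s_{i,k} = ⊕_{j ≤ k} (z_{i,j} ⊕ M_{i,j}·r_{j,i})` in the 1-based notation of the paper. -/
def rowMask (M : Fin q → Fin m → ZMod 2) (r : Fin m → Fin q → ZMod 2)
    (z : Fin q → Fin m → ZMod 2) : Fin q → Fin (m - 1) → ZMod 2 :=
  fun i k => Fin.partialSum (fun j => z i j + M i j * r j i) ⟨k + 1, by omega⟩

theorem REz_eq_iff (M : Fin q → Fin m → ZMod 2) (r : Fin m → Fin q → ZMod 2)
    (s : Fin q → Fin (m - 1) → ZMod 2) (z : Fin q → Fin m → ZMod 2) :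
    REz M r s = z ↔ (∀ i, ∑ j, z i j = ∑ j, M i j * r j i) ∧ s = rowMask M r z := by
  simp only [funext_iff, REz, CharTwo.add_eq_iff_eq_add (b := M _ _ * r _ _),
    forall_sBext_add_sBext_eq_iff, Finset.sum_add_distrib, CharTwo.add_eq_zero, forall_and,
    rowMask]

end Row

theorem REw_REz_eq_iff {m q : ℕ} (M : Fin q → Fin m → ZMod 2) (x : Fin m → ZMod 2)
    (w : Fin m → Fin q → ZMod 2) (z : Fin q → Fin m → ZMod 2)
    (rs : (Fin m → Fin q → ZMod 2) × (Fin q → Fin (m - 1) → ZMod 2)) :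
    (REw x rs.1, REz M rs.1 rs.2) = (w, z) ↔
      (∀ i, ∑ j, z i j = ∑ j, M i j * x j + ∑ j, M i j * aFun w j i) ∧
        rs = (columnMask x w, rowMask M (columnMask x w) z) := by
  obtain ⟨r, s⟩ := rs
  simp only [Prod.mk.injEq, REw_eq_iff, REz_eq_iff, ← sum_mul_columnMask]
  constructor
  · rintro ⟨rfl, parity, hs⟩
    exact ⟨parity, rfl, hs⟩
  · rintro ⟨parity, rfl, hs⟩
    exact ⟨rfl, parity, hs⟩

section PMF

variable {α β : Type*}

theorem map_apply_eq_ite (p : PMF α) {f : α → β} {b : β} {a₀ : α} {P : Prop} [Decidable P]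
    (h : ∀ a, f a = b ↔ P ∧ a = a₀) : p.map f b = if P then p a₀ else 0 := by
  classical
  simp only [PMF.map_apply, eq_comm (a := b), h, ite_and]
  split_ifs <;> simp

theorem pmfProd_apply (p : PMF α) (p' : PMF β) (a : α) (b : β) :
    pmfProd p p' (a, b) = p a * p' b := by
  classical
  have map_mk_apply (a' : α) : p'.map (Prod.mk a') (a, b) = if a' = a then p' b else 0 :=
    map_apply_eq_ite p' fun _ => Prod.mk_inj
  simp [pmfProd, map_mk_apply]

theorem uniformOfFintype_apply_pi_pi {γ : Type*} [Fintype α] [Fintype β] [Fintype γ]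
    [DecidableEq α] [DecidableEq β] [Nonempty γ] (A : α → β → γ) :
    PMF.uniformOfFintype (α → β → γ) A
      = ((Fintype.card γ : ℝ≥0∞) ^ (Fintype.card α * Fintype.card β))⁻¹ := by
  simp [pow_mul']

end PMF

/-- Simulator correctness / conditional structure of the
z-register: with `R, S` uniform and independent and `(W, Z) = RE_M(x; R, S)`,
for every `w` the conditional distribution of `Z` given `W = w` is the product
over rows `i` of the uniform distribution on the parity class
`{ z_i : ⊕_j z_{i,j} = (Mx)_i ⊕ σ_i(w) }`, where
`σ_i(w) = ⊕_j M_{i,j}·a_{j,i}(w)`. Equivalently (as stated here), since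
`P(W = w) = 2^{-mq}`, the joint probability of `(w, z)` factors as
`2^{-mq}` times the product over rows of the parity-class uniform weights
`1_{parity}·2^{-(m-1)}`. -/
theorem conditional_z_given_w {m q : ℕ} (hm : 1 ≤ m) (hq : 1 ≤ q)
    (M : Fin q → Fin m → ZMod 2) (x : Fin m → ZMod 2)
    (γ : PMF ((Fin m → Fin q → ZMod 2) × (Fin q → Fin m → ZMod 2)))
    (hγ : γ = (pmfProd (PMF.uniformOfFintype (Fin m → Fin q → ZMod 2))
          (PMF.uniformOfFintype (Fin q → Fin (m - 1) → ZMod 2))).map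
        (fun rs => (REw x rs.1, REz M rs.1 rs.2))) :
    ∀ (w : Fin m → Fin q → ZMod 2) (z : Fin q → Fin m → ZMod 2),
      γ (w, z)
        = ((2 : ℝ≥0∞) ^ (m * q))⁻¹ *
            ∏ i : Fin q,
              (if (∑ j, z i j)
                  = (∑ j, M i j * x j) + ∑ j, M i j * aFun w j i
                then ((2 : ℝ≥0∞) ^ (m - 1))⁻¹ else 0) := by
  intro w z
  let parity (i : Fin q) : Prop :=
    ∑ j, z i j = ∑ j, M i j * x j + ∑ j, M i j * aFun w j i
  calc γ (w, z)
      = if ∀ i, parity i then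
          ((2 : ℝ≥0∞) ^ (m * q))⁻¹ * ((2 : ℝ≥0∞) ^ (q * (m - 1)))⁻¹ else 0 := by
        rw [hγ, map_apply_eq_ite _ (REw_REz_eq_iff M x w z), pmfProd_apply,
          uniformOfFintype_apply_pi_pi, uniformOfFintype_apply_pi_pi]
        simp only [ZMod.card, Nat.cast_ofNat, Fintype.card_fin, parity]
    _ = ((2 : ℝ≥0∞) ^ (m * q))⁻¹ *
          if ∀ i, parity i then ∏ _i : Fin q, ((2 : ℝ≥0∞) ^ (m - 1))⁻¹ else 0 := by
        rw [mul_ite_zero, Finset.prod_const, Finset.card_fin, ← ENNReal.inv_pow, ← pow_mul,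
          mul_comm q]
    _ = _ := by simp only [Finset.prod_ite_zero, Finset.mem_univ, true_imp_iff, parity]
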